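/- arXiv:1807.10952 — 2 statements merged into one kernel-verified Lean document; each statement's English description precedes it below -/
import Mathlib

section
/- Let f : ℝ^m → ℝ^m be a C^∞ map, let y be the solution of the initial value problem y′(t) = f(y(t)), y(t₀) = y₀, defined on a neighborhood of t₀, and let k ≥ 1 be a natural number. For h > 0 define the Euler iterates y_{j}(h) by y_0(h) = y₀ and y_{j+1}(h) = y_j(h) + h·f(y_j(h)). Then the k-th forward difference of the Euler iterates divided by h^k approximates the k-th derivative of the solution with error O(h): (1/h^k) · ∑_{j=0}^{k} (−1)^j C(k,j) y_{k−j}(h) − y^{(k)}(t₀) = O(h) as h → 0⁺, i.e. there exist constants C > 0 and h₀ > 0 such that the Euclidean norm of the left-hand side is at most C·h for all 0 < h < h₀. -/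
open Filter

/-! Write `Q` for the operator sending an observable `G (h, x)` to its difference quotient
`(G (h, x + h • f x) - G (h, x)) / h` along an Euler step. Applying `Q` repeatedly turns the `k`-th
forward difference of the Euler iterates into `h ^ k • (Q^[k] G) (h, y₀)` with `G (h, x) = x`. By
Hadamard's lemma, `Q G` equals `∫₀¹ D G (h, x + s h • f x) (0, f x) ds`, so it extends smoothly to
`h = 0`, with a loss of one derivative, and its value there is the derivative of `G` along `f`.
Hence `(Q^[k] G) (h, y₀)` is differentiable in `h`, and its value at `h = 0` is the `k`-th iterated
derivative of the identity along `f`, evaluated at `y₀`, which is the `k`-th derivative of the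
solution. -/

open Asymptotics Topology

section Slice

variable {𝕜 H K E : Type*} [NontriviallyNormedField 𝕜] [NormedAddCommGroup H] [NormedSpace 𝕜 H]
  [NormedAddCommGroup K] [NormedSpace 𝕜 K] [NormedAddCommGroup E] [NormedSpace 𝕜 E]

theorem hasFTaylorSeriesUpTo_comp_prodMk_left {n : WithTop ℕ∞} {f : H × K → E}
    {p : H × K → FormalMultilinearSeries 𝕜 (H × K) E} (hp : HasFTaylorSeriesUpTo n f p) (t : K) :
    HasFTaylorSeriesUpTo n (fun x => f (x, t)) fun x m =>
      (p (x, t) m).compContinuousLinearMap fun _ => .inl 𝕜 H K := by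
  let ι : H →ᴬ[𝕜] H × K := (ContinuousAffineMap.id 𝕜 H).prod (.const 𝕜 H t)
  have hι : ι.contLinear = .inl 𝕜 H K := rfl
  have hslice := (hasFTaylorSeriesUpToOn_univ_iff.2 hp).comp_continuousAffineMap ι
  rw [hι] at hslice
  exact hasFTaylorSeriesUpToOn_univ_iff.1 hslice

end Slice

section ParametricIntegral

variable {H E : Type*} [NormedAddCommGroup H] [NormedSpace ℝ H] [NormedAddCommGroup E]
  [NormedSpace ℝ E]

theorem hasFDerivAt_intervalIntegral_of_continuous {F : H → ℝ → E} {F' : H → ℝ → H →L[ℝ] E}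
    (hF : Continuous ↿F) (hF' : Continuous ↿F')
    (hderiv : ∀ x t, HasFDerivAt (F · t) (F' x t) x) (a b : ℝ) (x₀ : H) :
    HasFDerivAt (fun x => ∫ t in a..b, F x t) (∫ t in a..b, F' x₀ t) x₀ := by
  have hFx (x : H) : Continuous (F x) := hF.comp (.prodMk_right x)
  have hF'x (x : H) : Continuous (F' x) := hF'.comp (.prodMk_right x)
  have hbound : ∀ᶠ x in 𝓝 x₀, ∀ t ∈ Set.uIcc a b, ‖F' x t‖ < ‖F' x₀ t‖ + 1 := by
    refine isCompact_uIcc.eventually_forall_of_forall_eventually fun t _ => ?_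
    have hleft : Continuous fun z : H × ℝ => ‖F' z.1 z.2‖ := hF'.norm
    have hright : Continuous fun z : H × ℝ => ‖F' x₀ z.2‖ + 1 :=
      ((hF'x x₀).comp continuous_snd).norm.add continuous_const
    exact hleft.continuousAt.eventually_lt hright.continuousAt (lt_add_one _)
  exact intervalIntegral.hasFDerivAt_integral_of_dominated_of_fderiv_le
    (bound := fun t => ‖F' x₀ t‖ + 1) hbound
    (.of_forall fun x => (hFx x).aestronglyMeasurable) ((hFx x₀).intervalIntegrable a b)
    (hF'x x₀).aestronglyMeasurable
    (.of_forall fun t ht x hx => (hx t (Set.uIoc_subset_uIcc ht)).le)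
    (((hF'x x₀).norm.add continuous_const).intervalIntegrable a b)
    (.of_forall fun t _ x _ => hderiv x t)

variable [CompleteSpace E]

theorem hasFTaylorSeriesUpTo_intervalIntegral {n : WithTop ℕ∞} {F : H → ℝ → E}
    {p : H → ℝ → FormalMultilinearSeries ℝ H E}
    (hp : ∀ t, HasFTaylorSeriesUpTo n (F · t) (p · t))
    (hcont : ∀ m : ℕ, m ≤ n → Continuous ↿fun x t => p x t m) (a b : ℝ) :
    HasFTaylorSeriesUpTo n (fun x => ∫ t in a..b, F x t) fun x m => ∫ t in a..b, p x t m where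
  zero_eq x := by
    calc (∫ t in a..b, p x t 0).curry0 = ∫ t in a..b, (p x t 0).curry0 :=
          ((continuousMultilinearCurryFin0 ℝ H E).toLinearIsometry.intervalIntegral_comp_comm
            fun t => p x t 0).symm
      _ = ∫ t in a..b, F x t := by simp only [(hp _).zero_eq]
  fderiv m hm x := by
    let curry : (H [×m + 1]→L[ℝ] E) →ₗᵢ[ℝ] H →L[ℝ] H [×m]→L[ℝ] E :=
      (continuousMultilinearCurryLeftEquiv ℝ (fun _ : Fin (m + 1) => H) E).toLinearIsometry
    have hcurry : (∫ t in a..b, p x t (m + 1)).curryLeft =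
        ∫ t in a..b, (p x t (m + 1)).curryLeft :=
      (curry.intervalIntegral_comp_comm (𝕜 := ℝ) (F := H →L[ℝ] H [×m]→L[ℝ] E)
        fun t => p x t (m + 1)).symm
    have hcont' : Continuous ↿fun x t => (p x t (m + 1)).curryLeft :=
      curry.continuous.comp (hcont (m + 1) (ENat.add_one_natCast_le_withTop_of_lt hm))
    have hderiv := hasFDerivAt_intervalIntegral_of_continuous (hcont m hm.le) hcont'
      (fun x t => (hp t).fderiv m hm x) a b x
    rwa [← hcurry] at hderiv
  cont m hm :=
    intervalIntegral.continuous_parametric_intervalIntegral_of_continuous' (hcont m hm) a b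

theorem contDiff_intervalIntegral {n : ℕ∞} {F : H → ℝ → E} (hF : ContDiff ℝ n ↿F) (a b : ℝ) :
    ContDiff ℝ n fun x => ∫ t in a..b, F x t := by
  obtain ⟨p, hp⟩ := hF
  refine (hasFTaylorSeriesUpTo_intervalIntegral
    (fun t => hasFTaylorSeriesUpTo_comp_prodMk_left hp t) (fun m hm => ?_) a b).contDiff
  exact (ContinuousMultilinearMap.continuous_precomp _).comp (hp.cont m hm)

end ParametricIntegral

section EulerQuotient

variable {E F : Type*} [NormedAddCommGroup E] [NormedSpace ℝ E]
  [NormedAddCommGroup F] [NormedSpace ℝ F]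

/-- The derivative of the observable `g` along the vector field `f`. -/
noncomputable def lieDerivAlong (f : E → E) (g : E → F) : E → F :=
  fun x => fderiv ℝ g x (f x)

theorem contDiff_lieDerivAlong {n : WithTop ℕ∞} {f : E → E} {g : E → F} (hf : ContDiff ℝ n f)
    (hg : ContDiff ℝ (n + 1) g) : ContDiff ℝ n (lieDerivAlong f g) :=
  (hg.fderiv_right le_rfl).clm_apply hf

theorem iteratedDeriv_comp_eq_lieDerivAlong_iterate {k : ℕ} {f : E → E} {g : E → F}
    (hf : ContDiff ℝ k f) (hg : ContDiff ℝ k g) {y : ℝ → E} {t₀ : ℝ}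
    (hy : ∀ᶠ t in 𝓝 t₀, HasDerivAt y (f (y t)) t) :
    iteratedDeriv k (g ∘ y) t₀ = (lieDerivAlong f)^[k] g (y t₀) := by
  induction k generalizing g with
  | zero => simp
  | succ k ih =>
    push_cast at hf hg
    have hderiv : deriv (g ∘ y) =ᶠ[𝓝 t₀] lieDerivAlong f g ∘ y := by
      filter_upwards [hy] with t ht
      have hgt := (hg.differentiable (by simp) (y t)).hasFDerivAt
      exact (hgt.comp_hasDerivAt t ht).deriv
    have hf' : ContDiff ℝ k f := hf.of_le le_self_add
    rw [iteratedDeriv_succ', hderiv.iteratedDeriv_eq, ih hf' (contDiff_lieDerivAlong hf' hg),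
      Function.iterate_succ_apply]

/-- The difference quotient `(G (h, x + h • f x) - G (h, x)) / h` of the `h`-dependent observable
`G` along an Euler step of size `h`. It is encoded by its integral representation, which is also
meaningful, and as smooth as `f` and the derivative of `G`, at `h = 0`. -/
noncomputable def eulerQuotient (f : E → E) (G : ℝ × E → F) : ℝ × E → F :=
  fun p => ∫ s in (0 : ℝ)..1, fderiv ℝ G (p.1, p.2 + (s * p.1) • f p.2) (0, f p.2)

variable [CompleteSpace F]

theorem contDiff_eulerQuotient {n : ℕ∞} {f : E → E} {G : ℝ × E → F} (hf : ContDiff ℝ n f)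
    (hG : ContDiff ℝ (n + 1) G) : ContDiff ℝ n (eulerQuotient f G) := by
  refine contDiff_intervalIntegral
    (F := fun (p : ℝ × E) (s : ℝ) => fderiv ℝ G (p.1, p.2 + (s * p.1) • f p.2) (0, f p.2)) ?_ 0 1
  have hG' : ContDiff ℝ n (fderiv ℝ G) := hG.fderiv_right le_rfl
  change ContDiff ℝ n fun q : (ℝ × E) × ℝ =>
    fderiv ℝ G (q.1.1, q.1.2 + (q.2 * q.1.1) • f q.1.2) (0, f q.1.2)
  exact (hG'.comp (by fun_prop)).clm_apply (by fun_prop)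

theorem contDiff_eulerQuotient_iterate {n k : ℕ} {f : E → E} {G : ℝ × E → F}
    (hf : ContDiff ℝ (n + k) f) (hG : ContDiff ℝ (n + k + 1) G) :
    ContDiff ℝ (n + 1) ((eulerQuotient f)^[k] G) := by
  induction k generalizing G with
  | zero => simpa using hG
  | succ k ih =>
    push_cast [← add_assoc] at hf hG
    exact ih (hf.of_le le_self_add)
      (contDiff_eulerQuotient (n := ((n + k + 1 : ℕ) : ℕ∞)) (mod_cast hf) (mod_cast hG))

theorem eulerQuotient_zero_left (f : E → E) {G : ℝ × E → F} (hG : Differentiable ℝ G) (x : E) :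
    eulerQuotient f G (0, x) = lieDerivAlong f (fun x => G (0, x)) x := by
  have hslice : HasFDerivAt (fun x => G (0, x)) ((fderiv ℝ G (0, x)).comp (.inr ℝ ℝ E)) x :=
    (hG (0, x)).hasFDerivAt.comp x (hasFDerivAt_prodMk_right 0 x)
  simp [eulerQuotient, lieDerivAlong, hslice.fderiv]

theorem eulerQuotient_iterate_zero_left {k : ℕ} {f : E → E} {G : ℝ × E → F}
    (hf : ContDiff ℝ k f) (hG : ContDiff ℝ k G) (x : E) :
    (eulerQuotient f)^[k] G (0, x) = (lieDerivAlong f)^[k] (fun x => G (0, x)) x := by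
  induction k generalizing G with
  | zero => rfl
  | succ k ih =>
    push_cast at hf hG
    have hf' : ContDiff ℝ k f := hf.of_le le_self_add
    have hL : (fun x => eulerQuotient f G (0, x)) = lieDerivAlong f fun x => G (0, x) :=
      funext <| eulerQuotient_zero_left f (hG.differentiable (by simp))
    rw [Function.iterate_succ_apply, ih hf' (contDiff_eulerQuotient (n := k) hf' hG),
      Function.iterate_succ_apply, hL]

theorem smul_eulerQuotient (f : E → E) {G : ℝ × E → F} (hG : ContDiff ℝ 1 G) (h : ℝ) (x : E) :
    h • eulerQuotient f G (h, x) = G (h, x + h • f x) - G (h, x) := by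
  have hline (r : ℝ) : HasDerivAt (fun r : ℝ => G (h, x + r • f x))
      (fderiv ℝ G (h, x + r • f x) (0, f x)) r := by
    have hpath : HasDerivAt (fun r : ℝ => (h, x + r • f x)) (0, f x) r := by
      simpa using (hasDerivAt_const r h).prodMk (((hasDerivAt_id r).smul_const (f x)).const_add x)
    exact (hG.differentiable one_ne_zero _).hasFDerivAt.comp_hasDerivAt r hpath
  have hG' : Continuous (fderiv ℝ G) := hG.continuous_fderiv one_ne_zero
  simpa [eulerQuotient] using intervalIntegral.integral_unitInterval_deriv_eq_sub
    (f' := fun r => fderiv ℝ G (h, x + r • f x) (0, f x)) (z₀ := 0) (z₁ := h)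
    ((hG'.comp (by fun_prop)).clm_apply continuous_const).continuousOn fun t _ => hline _

theorem fwdDiff_iterate_euler_eq_smul {k : ℕ} {f : E → E} {G : ℝ × E → F}
    (hf : ContDiff ℝ k f) (hG : ContDiff ℝ k G) {h : ℝ} {Y : ℕ → E}
    (hY : ∀ j, Y (j + 1) = Y j + h • f (Y j)) (j : ℕ) :
    (fwdDiff 1)^[k] (fun j => G (h, Y j)) j = h ^ k • (eulerQuotient f)^[k] G (h, Y j) := by
  induction k generalizing G with
  | zero => simp
  | succ k ih =>
    push_cast at hf hG
    have hf' : ContDiff ℝ k f := hf.of_le le_self_add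
    have hstep : fwdDiff 1 (fun j => G (h, Y j)) = h • fun j => eulerQuotient f G (h, Y j) := by
      funext j
      rw [fwdDiff, hY, Pi.smul_apply, smul_eulerQuotient f (hG.of_le le_add_self)]
    rw [Function.iterate_succ_apply, hstep, fwdDiff_iter_const_smul, Pi.smul_apply,
      ih hf' (contDiff_eulerQuotient (n := k) hf' hG), smul_smul, ← pow_succ',
      Function.iterate_succ_apply]

theorem fwdDiff_iterate_euler_sub_iteratedDeriv_isBigO {k : ℕ} {f : E → E} {g : E → F}
    (hf : ContDiff ℝ k f) (hg : ContDiff ℝ (k + 1) g) {y : ℝ → E} {t₀ : ℝ}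
    (hy : ∀ᶠ t in 𝓝 t₀, HasDerivAt y (f (y t)) t) {Y : ℝ → ℕ → E}
    (hY0 : ∀ h, Y h 0 = y t₀) (hYs : ∀ h j, Y h (j + 1) = Y h j + h • f (Y h j)) :
    (fun h => (h ^ k)⁻¹ • (fwdDiff 1)^[k] (fun j => g (Y h j)) 0 - iteratedDeriv k (g ∘ y) t₀)
      =O[𝓝[≠] 0] fun h => h := by
  set G : ℝ × E → F := fun p => g p.2
  set Q : ℝ × E → F := (eulerQuotient f)^[k] G
  have hG : ContDiff ℝ (k + 1) G := hg.comp contDiff_snd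
  have hGk : ContDiff ℝ k G := hG.of_le le_self_add
  have hgk : ContDiff ℝ k g := hg.of_le le_self_add
  have hQ : ContDiff ℝ 1 Q := by
    simpa using contDiff_eulerQuotient_iterate (n := 0) (by simpa using hf) (by simpa using hG)
  have hQ0 : Q (0, y t₀) = iteratedDeriv k (g ∘ y) t₀ := by
    rw [iteratedDeriv_comp_eq_lieDerivAlong_iterate hf hgk hy]
    exact eulerQuotient_iterate_zero_left hf hGk _
  have hslice : DifferentiableAt ℝ (fun h => Q (h, y t₀)) 0 :=
    (hQ.comp (contDiff_prodMk_left _)).differentiable one_ne_zero 0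
  have hlip : (fun h => Q (h, y t₀) - Q (0, y t₀)) =O[𝓝[≠] 0] fun h => h := by
    simpa using hslice.isBigO_sub.mono nhdsWithin_le_nhds
  refine hlip.congr' ?_ .rfl
  filter_upwards [self_mem_nhdsWithin] with h hh
  rw [fwdDiff_iterate_euler_eq_smul hf hGk (hYs h), hY0,
    inv_smul_smul₀ (pow_ne_zero k hh), hQ0]

end EulerQuotient

theorem fwdDiff_iterate_zero_eq_sum_range {V : Type*} [AddCommGroup V] [Module ℝ V] (z : ℕ → V)
    (k : ℕ) :
    (fwdDiff 1)^[k] z 0 = ∑ j ∈ Finset.range (k + 1), ((-1 : ℝ) ^ j * k.choose j) • z (k - j) := by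
  rw [fwdDiff_iter_eq_sum_shift, ← Finset.sum_range_reflect]
  refine Finset.sum_congr rfl fun j hj => ?_
  have hjk : j ≤ k := Finset.mem_range_succ_iff.1 hj
  rw [Nat.add_sub_cancel, Nat.sub_sub_self hjk, Nat.choose_symm hjk, ← Int.cast_smul_eq_zsmul ℝ]
  simp

theorem euler_iterates_forward_difference_approx_deriv_general {E : Type*}
    [NormedAddCommGroup E] [NormedSpace ℝ E] [CompleteSpace E] {k : ℕ} {f : E → E}
    (hf : ContDiff ℝ k f) {y : ℝ → E} {t₀ : ℝ}
    (hy : ∀ᶠ t in 𝓝 t₀, HasDerivAt y (f (y t)) t) {Y : ℝ → ℕ → E}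
    (hY0 : ∀ h, Y h 0 = y t₀) (hYs : ∀ h j, Y h (j + 1) = Y h j + h • f (Y h j)) :
    ∃ C > (0 : ℝ), ∃ h₀ > (0 : ℝ), ∀ h : ℝ, 0 < h → h < h₀ →
      ‖(h ^ k)⁻¹ • ∑ j ∈ Finset.range (k + 1),
          ((-1 : ℝ) ^ j * (k.choose j)) • Y h (k - j) - iteratedDeriv k y t₀‖ ≤ C * h := by
  have hO := (fwdDiff_iterate_euler_sub_iteratedDeriv_isBigO hf contDiff_id hy hY0 hYs).mono
    (nhdsGT_le_nhdsNE 0)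
  obtain ⟨C, hC, hbound⟩ := hO.exists_pos
  obtain ⟨h₀, hh₀, hball⟩ := mem_nhdsGT_iff_exists_Ioo_subset.1 hbound.bound
  refine ⟨C, hC, h₀, hh₀, fun h hpos hlt => ?_⟩
  simpa [fwdDiff_iterate_zero_eq_sum_range, abs_of_pos hpos] using hball ⟨hpos, hlt⟩

/-- Strategy (a): the `k`-th forward difference of the explicit Euler iterates with
stepsize `h`, divided by `h ^ k`, approximates the `k`-th derivative of the solution
of `y' = f(y)`, `y t₀ = y₀`, with error `O(h)` as `h → 0⁺`. -/
theorem euler_iterates_forward_difference_approx_deriv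
    (m : ℕ) (f : EuclideanSpace ℝ (Fin m) → EuclideanSpace ℝ (Fin m))
    (hf : ContDiff ℝ (⊤ : ℕ∞) f)
    (t₀ : ℝ) (y₀ : EuclideanSpace ℝ (Fin m)) (y : ℝ → EuclideanSpace ℝ (Fin m))
    (hy0 : y t₀ = y₀)
    (hy : ∀ᶠ t in nhds t₀, HasDerivAt y (f (y t)) t)
    (k : ℕ) (hk : 1 ≤ k)
    (Y : ℝ → ℕ → EuclideanSpace ℝ (Fin m))
    (hY0 : ∀ h : ℝ, Y h 0 = y₀)
    (hYs : ∀ (h : ℝ) (j : ℕ), Y h (j + 1) = Y h j + h • f (Y h j)) :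
    ∃ C > (0 : ℝ), ∃ h₀ > (0 : ℝ), ∀ h : ℝ, 0 < h → h < h₀ →
      ‖(h ^ k)⁻¹ • ∑ j ∈ Finset.range (k + 1),
          ((-1 : ℝ) ^ j * (k.choose j)) • Y h (k - j) - iteratedDeriv k y t₀‖ ≤ C * h :=
  euler_iterates_forward_difference_approx_deriv_general (hf.of_le (mod_cast le_top)) hy
    (by simpa only [hy0] using hY0) hYs
end

section
/- Let s ≥ 1 be a natural number, let t₀ ∈ ℝ, and let y : ℝ → ℝ^m be of class C^{2s+1} on a neighborhood of t₀. Then the defect of the Euler–Maclaurin formula of order 2s along y is O(h^{2s+1}) as h → 0: the function h ↦ y(t₀+h) − y(t₀) − (h/2)·( y′(t₀+h) + y′(t₀) ) + ∑_{k=1}^{s−1} (B_{2k}/(2k)!) · h^{2k} · ( y^{(2k)}(t₀+h) − y^{(2k)}(t₀) ) is O(h^{2s+1}) as h → 0, where B_{2k} is the 2k-th Bernoulli number and y^{(j)} denotes the j-th derivative of y. -/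
open Filter Asymptotics

/-!
Formally `y (t + h) - y t = (exp (hD) - 1) y t` with `D` the derivative, so applying the Bernoulli
series `∑ (B_j / j!) (hD) ^ j = hD / (exp (hD) - 1)` to this increment returns `h D y t`. For `y` of
class `C ^ (n + 1)`, keep only the terms `j < n` of the series. Taylor's theorem for `D ^ j y`, with
remainder `O (h ^ (n + 1 - j))`, makes each error `O (h ^ (n + 1))`, and the Taylor polynomials
recombine to `h D y t` exactly, by the same power series identity read coefficientwise. Since the
odd Bernoulli numbers beyond `B_1 = -1/2` vanish, the case `n = 2 s` is the Euler–Maclaurin formula,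
`B_1` supplying its trapezoidal term.
-/

open Finset
open scoped Nat Topology

section IteratedDeriv

variable {𝕜 F : Type*} [NontriviallyNormedField 𝕜] [NormedAddCommGroup F] [NormedSpace 𝕜 F]

theorem iteratedDeriv_iteratedDeriv (i j : ℕ) (f : 𝕜 → F) :
    iteratedDeriv i (iteratedDeriv j f) = iteratedDeriv (i + j) f := by
  simp only [iteratedDeriv_eq_iterate, Function.iterate_add_apply]

theorem contDiffAt_iteratedDeriv {n : WithTop ℕ∞} {j : ℕ} {f : 𝕜 → F} {x : 𝕜}
    (hf : ContDiffAt 𝕜 (n + j) f x) : ContDiffAt 𝕜 n (iteratedDeriv j f) x := by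
  induction j generalizing f with
  | zero => simpa using hf
  | succ j ih =>
    rw [iteratedDeriv_succ']
    exact ih (hf.derivWithin (by simp [add_assoc]))

end IteratedDeriv

section Taylor

variable {E : Type*} [NormedAddCommGroup E] [NormedSpace ℝ E] {f : ℝ → E} {n : ℕ} {t : ℝ}

theorem taylor_isLittleO_of_contDiffAt (hf : ContDiffAt ℝ n f t) :
    (fun h : ℝ ↦ f (t + h) - ∑ i ∈ range (n + 1), (h ^ i / i !) • iteratedDeriv i f t)
      =o[𝓝 0] fun h : ℝ ↦ h ^ n := by
  obtain ⟨u, hu, hfu⟩ := hf.contDiffOn le_rfl (by simp)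
  obtain ⟨ε, hε, hεu⟩ := Metric.mem_nhds_iff.1 hu
  have ht : t ∈ Metric.ball t ε := Metric.mem_ball_self hε
  have htaylor := taylor_isLittleO (convex_ball t ε) ht (hfu.mono hεu)
  rw [Metric.isOpen_ball.nhdsWithin_eq ht] at htaylor
  have hshift : Tendsto (fun h : ℝ ↦ t + h) (𝓝 0) (𝓝 t) := by
    simpa using (continuous_const_add t).tendsto 0
  refine (htaylor.comp_tendsto hshift).congr (fun h ↦ ?_) (fun h ↦ by simp)
  simp only [Function.comp_apply, taylor_within_apply, add_sub_cancel_left,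
    iteratedDerivWithin_of_isOpen Metric.isOpen_ball ht, inv_mul_eq_div]

theorem taylor_isBigO_of_contDiffAt (hf : ContDiffAt ℝ n f t) :
    (fun h : ℝ ↦ f (t + h) - ∑ i ∈ range n, (h ^ i / i !) • iteratedDeriv i f t)
      =O[𝓝 0] fun h : ℝ ↦ h ^ n := by
  have hlast : (fun h : ℝ ↦ (h ^ n / n !) • iteratedDeriv n f t) =O[𝓝 0] fun h : ℝ ↦ h ^ n := by
    simpa [div_eq_inv_mul] using ((isBigO_refl (fun h : ℝ ↦ h ^ n) (𝓝 0)).const_mul_left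
      ((n ! : ℝ)⁻¹)).smul (isBigO_const_const (iteratedDeriv n f t) (one_ne_zero (α := ℝ)) _)
  refine ((taylor_isLittleO_of_contDiffAt hf).isBigO.add hlast).congr_left fun h ↦ ?_
  rw [sum_range_succ]
  abel

theorem taylor_iteratedDeriv_isBigO {j : ℕ} (hf : ContDiffAt ℝ (n + 1 + j : ℕ) f t) :
    (fun h : ℝ ↦ iteratedDeriv j f (t + h) - iteratedDeriv j f t
        - ∑ i ∈ range n, (h ^ (i + 1) / (i + 1)!) • iteratedDeriv (j + i + 1) f t)
      =O[𝓝 0] fun h : ℝ ↦ h ^ (n + 1) := by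
  have hj : ContDiffAt ℝ (n + 1 : ℕ) (iteratedDeriv j f) t :=
    contDiffAt_iteratedDeriv (by exact_mod_cast hf)
  refine (taylor_isBigO_of_contDiffAt hj).congr_left fun h ↦ ?_
  have hindex (i : ℕ) : i + 1 + j = j + i + 1 := by ring
  rw [sum_range_succ', add_comm (∑ _ ∈ _, _), ← sub_sub]
  simp [iteratedDeriv_iteratedDeriv, hindex]

end Taylor

theorem sum_range_two_mul_of_odd_eq_zero {M : Type*} [AddCommMonoid M] {g : ℕ → M}
    (hg : ∀ j, Odd j → 1 < j → g j = 0) (s : ℕ) :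
    ∑ j ∈ range (2 * (s + 1)), g j = g 0 + g 1 + ∑ k ∈ Icc 1 s, g (2 * k) := by
  induction s with
  | zero => simp [sum_range_succ]
  | succ s ih =>
    have hodd : g (2 * (s + 1) + 1) = 0 := hg _ (odd_two_mul_add_one _) (by lia)
    rw [mul_add_one 2 (s + 1), sum_range_succ, sum_range_succ, ih, hodd, add_zero,
      sum_Icc_succ_top (by lia), add_assoc]

section Bernoulli

theorem sum_antidiagonal_bernoulli_div_factorial (K : Type*) [Field K] [CharZero K] (n : ℕ) :
    ∑ p ∈ antidiagonal n, (bernoulli p.1 / p.1 ! : K) * ((p.2 + 1)! : K)⁻¹ =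
      if n = 0 then 1 else 0 := by
  have hcoeff := congrArg (PowerSeries.coeff (n + 1)) (bernoulliPowerSeries_mul_exp_sub_one K)
  simpa [bernoulliPowerSeries, PowerSeries.coeff_mul, Finset.Nat.sum_antidiagonal_succ',
    PowerSeries.coeff_X, PowerSeries.coeff_exp] using hcoeff

variable {K V : Type*} [Field K] [CharZero K] [AddCommGroup V] [Module K V]

/-- With `c j = D ^ j y` this is the truncation of `(hD / (exp (hD) - 1)) (exp (hD) - 1) y = hD y`
at total degree `n` in `h`. -/
theorem sum_bernoulli_smul_sum_smul {n : ℕ} (hn : n ≠ 0) (c : ℕ → V) (h : K) :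
    ∑ j ∈ range n, (bernoulli j / j ! * h ^ j : K) •
      ∑ i ∈ range (n - j), (h ^ (i + 1) / (i + 1)! : K) • c (j + i + 1) = h • c 1 := by
  have hdegree (d : ℕ) : ∑ p ∈ antidiagonal d, (bernoulli p.1 / p.1 ! * h ^ p.1 : K) •
      (h ^ (p.2 + 1) / (p.2 + 1)! : K) • c (p.1 + p.2 + 1) = if d = 0 then h • c 1 else 0 := by
    calc _ = ∑ p ∈ antidiagonal d, ((bernoulli p.1 / p.1 ! : K) * ((p.2 + 1)! : K)⁻¹) •
          h ^ (d + 1) • c (d + 1) := by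
          refine sum_congr rfl fun p hp ↦ ?_
          rw [← mem_antidiagonal.1 hp, smul_smul, smul_smul]
          ring_nf
      _ = if d = 0 then h • c 1 else 0 := by
          rw [← sum_smul, sum_antidiagonal_bernoulli_div_factorial]
          split_ifs with hd <;> simp [hd]
  simp only [smul_sum]
  rw [← sum_range_diag_flip n fun j i ↦ (bernoulli j / j ! * h ^ j : K) •
    (h ^ (i + 1) / (i + 1)! : K) • c (j + i + 1)]
  simp only [← Nat.succ_eq_add_one, ← Finset.Nat.sum_antidiagonal_eq_sum_range_succ
    fun j i ↦ (bernoulli j / j ! * h ^ j : K) • (h ^ (i + 1) / (i + 1)! : K) • c (j + i + 1)]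
  simp [hdegree, hn, Nat.pos_iff_ne_zero]

theorem sum_range_two_mul_bernoulli_smul {s : ℕ} (hs : 1 ≤ s) (d : ℕ → V) (h : K) :
    ∑ j ∈ range (2 * s), (bernoulli j / j ! * h ^ j : K) • d j =
      d 0 - (h / 2) • d 1
        + ∑ k ∈ Icc 1 (s - 1), (bernoulli (2 * k) / (2 * k)! * h ^ (2 * k) : K) • d (2 * k) := by
  obtain ⟨r, rfl⟩ := Nat.exists_eq_add_of_le' hs
  rw [sum_range_two_mul_of_odd_eq_zero fun j hodd hj ↦ by simp [bernoulli_eq_zero_of_odd hodd hj]]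
  have hone : (bernoulli 1 / 1 ! * h ^ 1 : K) = -(h / 2) := by
    rw [bernoulli_one, Nat.factorial_one]
    push_cast
    ring
  simp only [hone, neg_smul, ← sub_eq_add_neg]
  simp

end Bernoulli

section EulerMaclaurin

variable {E : Type*} [NormedAddCommGroup E] [NormedSpace ℝ E] {y : ℝ → E} {t₀ : ℝ}

theorem sum_bernoulli_smul_sub_smul_deriv_isBigO {n : ℕ} (hn : n ≠ 0)
    (hy : ContDiffAt ℝ (n + 1 : ℕ) y t₀) :
    (fun h : ℝ ↦ ∑ j ∈ range n, (bernoulli j / j ! * h ^ j : ℝ) •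
        (iteratedDeriv j y (t₀ + h) - iteratedDeriv j y t₀) - h • deriv y t₀)
      =O[𝓝 0] fun h : ℝ ↦ h ^ (n + 1) := by
  have hterm : ∀ j ∈ range n, (fun h : ℝ ↦ (bernoulli j / j ! * h ^ j : ℝ) •
      (iteratedDeriv j y (t₀ + h) - iteratedDeriv j y t₀
        - ∑ i ∈ range (n - j), (h ^ (i + 1) / (i + 1)!) • iteratedDeriv (j + i + 1) y t₀))
      =O[𝓝 0] fun h : ℝ ↦ h ^ (n + 1) := by
    intro j hj
    have hjn : n - j + 1 + j = n + 1 := by grind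
    have hcoeff : (fun h : ℝ ↦ (bernoulli j / j ! * h ^ j : ℝ)) =O[𝓝 0] fun h : ℝ ↦ h ^ j :=
      (isBigO_refl _ _).const_mul_left _
    refine (hcoeff.smul (taylor_iteratedDeriv_isBigO (n := n - j)
      (hjn ▸ hy))).congr_right fun h ↦ ?_
    rw [smul_eq_mul, ← pow_add, add_comm j, hjn]
  refine (IsBigO.sum hterm).congr_left fun h ↦ ?_
  simp only [Finset.sum_apply, smul_sub _ (_ - _) (∑ _ ∈ _, _), sum_sub_distrib]
  rw [sum_bernoulli_smul_sum_smul hn (iteratedDeriv · y t₀) h, iteratedDeriv_one]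

theorem euler_maclaurin_method_defect_isBigO_general {s : ℕ} (hs : 1 ≤ s)
    (hy : ContDiffAt ℝ (2 * s + 1 : ℕ) y t₀) :
    (fun h : ℝ ↦
        y (t₀ + h) - y t₀ - (h / 2) • (deriv y (t₀ + h) + deriv y t₀)
          + ∑ k ∈ Icc 1 (s - 1), (bernoulli (2 * k) / (2 * k)! * h ^ (2 * k) : ℝ) •
              (iteratedDeriv (2 * k) y (t₀ + h) - iteratedDeriv (2 * k) y t₀))
      =O[𝓝 0] fun h : ℝ ↦ h ^ (2 * s + 1) := by
  refine (sum_bernoulli_smul_sub_smul_deriv_isBigO (by lia) hy).congr_left fun h ↦ ?_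
  rw [sum_range_two_mul_bernoulli_smul hs
    fun j ↦ iteratedDeriv j y (t₀ + h) - iteratedDeriv j y t₀,
    iteratedDeriv_zero, iteratedDeriv_one]
  module

end EulerMaclaurin

/-- The defect of the Euler–Maclaurin one-step formula of order `2s` along a `C^{2s+1}`
function `y` is `O(h^{2s+1})` as `h → 0`. -/
theorem euler_maclaurin_method_defect_isBigO
    (m s : ℕ) (hs : 1 ≤ s) (t₀ : ℝ) (y : ℝ → EuclideanSpace ℝ (Fin m))
    (hy : ContDiffAt ℝ (2 * s + 1 : ℕ) y t₀) :
    (fun h : ℝ =>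
        y (t₀ + h) - y t₀ - (h / 2) • (deriv y (t₀ + h) + deriv y t₀)
          + ∑ k ∈ Finset.Icc 1 (s - 1),
            (((bernoulli (2 * k) : ℚ) : ℝ) / (2 * k).factorial * h ^ (2 * k)) •
              (iteratedDeriv (2 * k) y (t₀ + h) - iteratedDeriv (2 * k) y t₀))
      =O[nhds (0 : ℝ)] fun h : ℝ => h ^ (2 * s + 1) :=
  euler_maclaurin_method_defect_isBigO_general hs hy
end
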